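/- arXiv:1402.4397 — 6 statements merged into one kernel-verified Lean document; each statement's English description precedes it below -/
import Mathlib

section
/- Let S and T be commutative atomic cancellative monoids and let φ: S → T be an isoatomic weak transfer homomorphism. Then φ induces an isomorphism of the associated reduced monoids: the map sending the class of a to the class of φ(a) is a monoid isomorphism from S modulo associates onto T modulo associates (i.e., Associates S ≅ Associates T). -/
def MAtom {H : Type*} [Monoid H] (u : H) : Prop :=
  ¬ IsUnit u ∧ ∀ a b : H, u = a * b → IsUnit a ∨ IsUnit b

def TAssoc {H : Type*} [Monoid H] (a b : H) : Prop :=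
  ∃ ε η : Hˣ, b = (ε : H) * a * (η : H)

def Atomic (H : Type*) [Monoid H] : Prop :=
  ∀ a : H, ¬ IsUnit a → ∃ l : List H, l ≠ [] ∧ (∀ u ∈ l, MAtom u) ∧ a = l.prod

def T1Cond {H T : Type*} [Monoid H] [Monoid T] (φ : H →* T) : Prop :=
  (∀ t : T, ∃ (ε η : Tˣ) (a : H), t = (ε : T) * φ a * (η : T)) ∧
    ∀ a : H, IsUnit (φ a) ↔ IsUnit a

def IsTransferHom {H T : Type*} [Monoid H] [Monoid T] (φ : H →* T) : Prop :=
  T1Cond φ ∧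
    ∀ (a : H) (b₁ b₂ : T), φ a = b₁ * b₂ →
      ∃ (a₁ a₂ : H) (ε : Tˣ), a = a₁ * a₂ ∧ φ a₁ = b₁ * ((ε⁻¹ : Tˣ) : T) ∧ φ a₂ = (ε : T) * b₂

def IsWeakTransferHom {H T : Type*} [Monoid H] [Monoid T] (φ : H →* T) : Prop :=
  T1Cond φ ∧
    ∀ (a : H) (n : ℕ), 0 < n → ∀ v : Fin n → T, (∀ i, MAtom (v i)) →
      φ a = (List.ofFn v).prod →
      ∃ (u : Fin n → H) (σ : Equiv.Perm (Fin n)),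
        (∀ i, MAtom (u i)) ∧ a = (List.ofFn u).prod ∧ ∀ i, TAssoc (φ (u i)) (v (σ i))

def IsIsoatomic {H T : Type*} [Monoid H] [Monoid T] (φ : H →* T) : Prop :=
  ∀ u v : H, MAtom u → MAtom v → TAssoc (φ u) (φ v) → TAssoc u v

def lengthsOf {H : Type*} [Monoid H] (a : H) : Set ℕ :=
  {n | (n = 0 ∧ IsUnit a) ∨
    ∃ l : List H, l ≠ [] ∧ (∀ u ∈ l, MAtom u) ∧ a = l.prod ∧ l.length = n}

theorem TAssoc.iff_associated {H : Type*} [CommMonoid H] {a b : H} :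
    TAssoc a b ↔ Associated a b := by
  constructor
  · rintro ⟨ε, η, rfl⟩
    exact ⟨ε * η, by push_cast; rw [mul_comm (ε : H) a, mul_assoc]⟩
  · rintro ⟨ε, rfl⟩
    exact ⟨1, ε, by simp⟩

theorem MAtom.mul_unit {H : Type*} [CommMonoid H] {a : H} (h : MAtom a) (e : Hˣ) :
    MAtom (a * e) := by
  refine ⟨by simpa using h.1, fun x y hxy => ?_⟩
  have := h.2 x (y * (e⁻¹ : Hˣ)) (by rw [← mul_assoc, ← hxy]; simp)
  simpa using this

theorem weakTransfer_lift {S T : Type*} [CancelCommMonoid S] [CancelCommMonoid T]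
    (φ : S →* T) (hw : IsWeakTransferHom φ) (a : S) (n : ℕ) (hn : 0 < n) (v : Fin n → T)
    (hv : ∀ i, MAtom (v i)) (h : Associated (∏ i, v i) (φ a)) :
    ∃ u : Fin n → S, (∀ i, MAtom (u i)) ∧ a = ∏ i, u i ∧ ∀ i, Associated (φ (u i)) (v i) := by
  obtain ⟨e, he⟩ := h
  let f : Fin n → Tˣ := fun i => if i = ⟨0, hn⟩ then e else 1
  have hf : ∏ i, (f i : T) = e := by
    rw [← Units.coe_prod]
    simp [f]
  obtain ⟨u, σ, hu, hau, hs⟩ := hw.2 a n hn (fun i => v i * f i)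
    (fun i => (hv i).mul_unit _) (by
      rw [List.prod_ofFn, Finset.prod_mul_distrib, hf, he])
  refine ⟨fun i => u (σ.symm i), fun i => hu _, ?_, fun i => ?_⟩
  · rw [hau, List.prod_ofFn, Equiv.prod_comp σ.symm u]
  · have := TAssoc.iff_associated.1 (hs (σ.symm i))
    rw [Equiv.apply_symm_apply] at this
    exact this.trans (Associated.symm ⟨f i, rfl⟩)

/-- An isoatomic weak transfer homomorphism between commutative atomic
cancellative monoids induces an isomorphism of the associated reduced monoids. -/
theorem associates_mulEquiv_of_isoatomic_weakTransfer {S T : Type*}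
    [CancelCommMonoid S] [CancelCommMonoid T] (hS : Atomic S) (hT : Atomic T)
    (φ : S →* T) (hw : IsWeakTransferHom φ) (hi : IsIsoatomic φ) :
    ∃ e : Associates S ≃* Associates T,
      ∀ a : S, e (Associates.mk a) = Associates.mk (φ a) := by
  have hinj : ∀ a b : S, Associated (φ a) (φ b) → Associated a b := by
    intro a b hab
    by_cases ha : IsUnit (φ a)
    · have hb : IsUnit (φ b) := hab.isUnit ha
      obtain ⟨x, rfl⟩ := (hw.1.2 a).1 ha
      obtain ⟨y, rfl⟩ := (hw.1.2 b).1 hb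
      exact ⟨x⁻¹ * y, by simp⟩
    · obtain ⟨l, hl, hat, hprod⟩ := hT _ ha
      have hv : ∀ i : Fin l.length, MAtom (l.get i) := fun i => hat _ (List.get_mem l i)
      have hn : 0 < l.length := List.length_pos_iff.2 hl
      have hp : ∏ i, l.get i = φ a := by
        rw [hprod, ← List.prod_ofFn, List.ofFn_get]
      obtain ⟨u, hu, rfl, hu'⟩ := weakTransfer_lift φ hw a _ hn l.get hv (by rw [hp])
      obtain ⟨w, hw1, rfl, hw'⟩ := weakTransfer_lift φ hw b _ hn l.get hv (by rw [hp]; exact hab)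
      have : ∀ i, Associated (u i) (w i) := fun i =>
        TAssoc.iff_associated.1 (hi _ _ (hu i) (hw1 i)
          (TAssoc.iff_associated.2 ((hu' i).trans (hw' i).symm)))
      exact Associated.prod _ _ _ fun i _ => this i
  let F : Associates S →* Associates T :=
    { toFun := Quotient.map φ (fun a b h => h.map φ)
      map_one' := by
        change Associates.mk (φ 1) = 1
        simp
      map_mul' := by
        rintro ⟨a⟩ ⟨b⟩
        change Associates.mk (φ (a * b)) = Associates.mk (φ a) * Associates.mk (φ b)
        rw [map_mul, Associates.mk_mul_mk] }
  have hF : ∀ a, F (Associates.mk a) = Associates.mk (φ a) := fun a => rfl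
  refine ⟨MulEquiv.ofBijective F ⟨?_, ?_⟩, fun a => hF a⟩
  · intro x y
    obtain ⟨a, rfl⟩ := Associates.mk_surjective x
    obtain ⟨b, rfl⟩ := Associates.mk_surjective y
    rw [hF, hF, Associates.mk_eq_mk_iff_associated, Associates.mk_eq_mk_iff_associated]
    exact hinj a b
  · intro y
    obtain ⟨t, rfl⟩ := Associates.mk_surjective y
    obtain ⟨ε, η, a, h⟩ := hw.1.1 t
    exact ⟨Associates.mk a, by
      rw [hF, Associates.mk_eq_mk_iff_associated]
      exact TAssoc.iff_associated.1 ⟨ε, η, h⟩⟩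
end

section
/- Let H be a cancellative monoid, T a commutative atomic cancellative monoid, and φ: H → T a monoid homomorphism satisfying (T1). Then: (a) φ is a transfer homomorphism if and only if, whenever a ∈ H, b_1, b_2 ∈ T and φ(a) = b_1 b_2, there exist a_1, a_2 ∈ H with a = a_1 a_2, φ(a_1) ≃ b_1 and φ(a_2) ≃ b_2; and this holds if and only if, whenever a ∈ H and φ(a) = v_1⋯v_n with atoms v_1, …, v_n of T, there exist atoms u_1, …, u_n of H with a = u_1⋯u_n and φ(u_i) ≃ v_i for each i. (b) If moreover H is commutative, then φ is a transfer homomorphism if and only if φ is a weak transfer homomorphism. -/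
theorem tassoc_iff {T : Type*} [CancelCommMonoid T] (x y : T) :
    TAssoc x y ↔ Associated x y := by
  constructor
  · rintro ⟨e, f, h⟩
    exact ⟨e * f, by rw [h, Units.val_mul, mul_comm (e : T) x, mul_assoc]⟩
  · rintro ⟨e, h⟩
    exact ⟨1, e, by simp [h]⟩

theorem atom_of_assoc {H T : Type*} [CancelMonoid H] [CancelCommMonoid T]
    (φ : H →* T) (h1 : T1Cond φ) (a : H) (v : T) (hv : MAtom v)
    (h : Associated (φ a) v) : MAtom a := by
  refine ⟨fun ha => hv.1 (h.isUnit ((h1.2 a).2 ha)), ?_⟩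
  rintro x y rfl
  obtain ⟨e, he⟩ := h
  rw [map_mul, mul_assoc] at he
  rcases hv.2 _ _ he.symm with h | h
  · exact Or.inl ((h1.2 x).1 h)
  · exact Or.inr ((h1.2 y).1 (isUnit_of_mul_isUnit_left h))

def PropB {H T : Type*} [CancelMonoid H] [CancelCommMonoid T] (φ : H →* T) : Prop :=
  ∀ (a : H) (b₁ b₂ : T), φ a = b₁ * b₂ →
    ∃ a₁ a₂ : H, a = a₁ * a₂ ∧ TAssoc (φ a₁) b₁ ∧ TAssoc (φ a₂) b₂

def PropC {H T : Type*} [CancelMonoid H] [CancelCommMonoid T] (φ : H →* T) : Prop :=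
  ∀ (a : H) (n : ℕ), 0 < n → ∀ v : Fin n → T, (∀ i, MAtom (v i)) →
    φ a = (List.ofFn v).prod →
    ∃ u : Fin n → H, (∀ i, MAtom (u i)) ∧ a = (List.ofFn u).prod ∧
      ∀ i, TAssoc (φ (u i)) (v i)

theorem transfer_iff_B {H T : Type*} [CancelMonoid H] [CancelCommMonoid T]
    (φ : H →* T) (h1 : T1Cond φ) : IsTransferHom φ ↔ PropB φ := by
  constructor
  · rintro ⟨-, h⟩ a b₁ b₂ hab
    obtain ⟨a₁, a₂, ε, h, h', h''⟩ := h a b₁ b₂ hab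
    refine ⟨a₁, a₂, h, ?_, ?_⟩
    · exact ⟨1, ε, by simp [h']⟩
    · exact ⟨ε⁻¹, 1, by simp [h'']⟩
  · intro h
    refine ⟨h1, fun a b₁ b₂ hab => ?_⟩
    obtain ⟨a₁, a₂, h, h', h''⟩ := h a b₁ b₂ hab
    rw [tassoc_iff] at h' h''
    obtain ⟨e, he⟩ := h'
    refine ⟨a₁, a₂, e, h, by simp [← he], ?_⟩
    rw [h, map_mul, ← he, mul_assoc] at hab
    exact mul_left_cancel hab

theorem B_to_C {H T : Type*} [CancelMonoid H] [CancelCommMonoid T]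
    (φ : H →* T) (h1 : T1Cond φ) (hB : PropB φ) : PropC φ := by
  have key : ∀ (n : ℕ) (a : H) (v : Fin (n + 1) → T), (∀ i, MAtom (v i)) →
      Associated (φ a) (List.ofFn v).prod →
      ∃ u : Fin (n + 1) → H, a = (List.ofFn u).prod ∧ ∀ i, Associated (φ (u i)) (v i) := by
    intro n
    induction n with
    | zero =>
      intro a v hv h
      refine ⟨fun _ => a, by simp, fun i => ?_⟩
      fin_cases i
      simpa using h
    | succ n ih =>
      intro a v hv h
      obtain ⟨e, he⟩ := h.symm
      rw [List.ofFn_succ, List.prod_cons, mul_assoc] at he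
      obtain ⟨a₁, a₂, h, h', h''⟩ := hB a _ _ he.symm
      rw [tassoc_iff] at h' h''
      obtain ⟨u, hu, hu'⟩ := ih a₂ (fun i => v i.succ) (fun i => hv _)
        (h''.trans (associated_mul_unit_left _ _ e.isUnit))
      refine ⟨Fin.cons a₁ u, by simp [List.ofFn_succ, h, hu], fun i => ?_⟩
      refine Fin.cases ?_ (fun j => ?_) i
      · simpa using h'
      · simpa using hu' j
  intro a n hn v hv h
  obtain ⟨m, rfl⟩ : ∃ m, n = m + 1 := ⟨n - 1, by omega⟩
  obtain ⟨u, hu, hu'⟩ := key m a v hv (by rw [h])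
  exact ⟨u, fun i => atom_of_assoc φ h1 _ _ (hv i) (hu' i), hu,
    fun i => (tassoc_iff _ _).2 (hu' i)⟩

theorem assoc_prod {H T : Type*} [CancelMonoid H] [CancelCommMonoid T]
    (φ : H →* T) (l' : List H) (l : List T)
    (h : List.Forall₂ (fun u v => Associated (φ u) v) l' l) :
    Associated (φ l'.prod) l.prod := by
  induction h with
  | nil => simp
  | cons h _ ih =>
    rw [List.prod_cons, List.prod_cons, map_mul]
    exact h.mul_mul ih

theorem C_to_B {H T : Type*} [CancelMonoid H] [CancelCommMonoid T] (hT : Atomic T)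
    (φ : H →* T) (hC : PropC φ) : PropB φ := by
  intro a b₁ b₂ hab
  simp only [tassoc_iff]
  by_cases hb₁ : IsUnit b₁
  · refine ⟨1, a, by simp, ?_, ?_⟩
    · rw [map_one]
      exact (associated_one_iff_isUnit.2 hb₁).symm
    · rw [hab]
      exact associated_unit_mul_left _ _ hb₁
  by_cases hb₂ : IsUnit b₂
  · refine ⟨a, 1, by simp, ?_, ?_⟩
    · rw [hab]
      exact associated_mul_unit_left _ _ hb₂
    · rw [map_one]
      exact (associated_one_iff_isUnit.2 hb₂).symm
  obtain ⟨l₁, hne, hl₁, rfl⟩ := hT b₁ hb₁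
  obtain ⟨l₂, -, hl₂, rfl⟩ := hT b₂ hb₂
  obtain ⟨u, -, hu, hu'⟩ := hC a (l₁ ++ l₂).length
    (by have := List.length_pos_iff.2 hne; simp; omega) (l₁ ++ l₂).get
    (by
      intro i
      have := List.get_mem (l₁ ++ l₂) i
      rcases List.mem_append.1 this with h | h
      · exact hl₁ _ h
      · exact hl₂ _ h)
    (by rw [List.ofFn_get, List.prod_append, hab])
  have hF : List.Forall₂ (fun u v => Associated (φ u) v) (List.ofFn u) (l₁ ++ l₂) := by
    rw [List.forall₂_iff_get]
    refine ⟨by simp, fun i h h' => ?_⟩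
    have := (tassoc_iff _ _).1 (hu' ⟨i, h'⟩)
    simpa using this
  have ht := List.forall₂_take l₁.length hF
  have hd := List.forall₂_drop l₁.length hF
  rw [List.take_left] at ht
  rw [List.drop_left] at hd
  exact ⟨_, _, by rw [← List.prod_append, List.take_append_drop, hu],
    assoc_prod φ _ _ ht, assoc_prod φ _ _ hd⟩

theorem weak_to_C {H T : Type*} [CancelMonoid H] [CancelCommMonoid T]
    (φ : H →* T) (hc : ∀ a b : H, a * b = b * a) (h : IsWeakTransferHom φ) : PropC φ := by
  intro a n hn v hv hav
  obtain ⟨u, σ, hu, ha, hs⟩ := h.2 a n hn v hv hav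
  refine ⟨u ∘ σ.symm, fun i => hu _, ?_, fun i => by simpa using hs (σ.symm i)⟩
  rw [ha]
  refine (List.Perm.prod_eq' (Equiv.Perm.ofFn_comp_perm σ.symm u) ?_).symm
  exact List.pairwise_of_forall (fun x y => hc x y)

/-- Characterizations of transfer homomorphisms into a commutative atomic
cancellative monoid, for `φ` satisfying (T1); and if `H` is commutative, transfer and weak
transfer homomorphisms coincide. -/
theorem transferHom_characterizations {H T : Type*} [CancelMonoid H] [CancelCommMonoid T]
    (hT : Atomic T) (φ : H →* T) (h1 : T1Cond φ) :
    (IsTransferHom φ ↔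
      ∀ (a : H) (b₁ b₂ : T), φ a = b₁ * b₂ →
        ∃ a₁ a₂ : H, a = a₁ * a₂ ∧ TAssoc (φ a₁) b₁ ∧ TAssoc (φ a₂) b₂) ∧
    ((∀ (a : H) (b₁ b₂ : T), φ a = b₁ * b₂ →
        ∃ a₁ a₂ : H, a = a₁ * a₂ ∧ TAssoc (φ a₁) b₁ ∧ TAssoc (φ a₂) b₂) ↔
      ∀ (a : H) (n : ℕ), 0 < n → ∀ v : Fin n → T, (∀ i, MAtom (v i)) →
        φ a = (List.ofFn v).prod →
        ∃ u : Fin n → H, (∀ i, MAtom (u i)) ∧ a = (List.ofFn u).prod ∧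
          ∀ i, TAssoc (φ (u i)) (v i)) ∧
    ((∀ a b : H, a * b = b * a) → (IsTransferHom φ ↔ IsWeakTransferHom φ)) := by
  have hBC : PropB φ ↔ PropC φ := ⟨B_to_C φ h1, C_to_B hT φ⟩
  refine ⟨transfer_iff_B φ h1, hBC, fun hc => ⟨fun h => ⟨h1, ?_⟩, fun h => ?_⟩⟩
  · intro a n hn v hv hav
    obtain ⟨u, hu, ha, hs⟩ := B_to_C φ h1 ((transfer_iff_B φ h1).1 h) a n hn v hv hav
    exact ⟨u, 1, hu, ha, hs⟩
  · exact (transfer_iff_B φ h1).2 (hBC.2 (weak_to_C φ hc h))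
end

section
/- Let H and T be atomic cancellative monoids and let φ: H → T be an isoatomic weak transfer homomorphism, with extension φ_p to permutable factorizations. Then d_p(z, z') = d_p(φ_p(z), φ_p(z')) for any two permutable factorizations z, z' of the same element a ∈ H. In particular, the permutable catenary degrees coincide: c_p(H) = c_p(T). -/
structure RF (H : Type*) [Monoid H] where
  u : Hˣ
  l : List H

namespace RF

variable {H : Type*} [Monoid H]

def IsRigid (z : RF H) : Prop := ∀ x ∈ z.l, MAtom x

def prod (z : RF H) : H := (z.u : H) * z.l.prod

def len (z : RF H) : ℕ := z.l.length

def mul (z w : RF H) : RF H :=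
  match z.l with
  | [] => ⟨z.u * w.u, w.l⟩
  | a :: as =>
      ⟨z.u, ((a :: as).dropLast ++
        [(a :: as).getLast (List.cons_ne_nil a as) * (w.u : H)]) ++ w.l⟩

end RF

/-- The equivalence relation on rigid factorization data: same length, and the
atoms agree up to an interpolating family of units `δ`, with the unit part
absorbing `δ 0` and `δ` becoming trivial after the last atom. -/
def RFEq {H : Type*} [Monoid H] (z w : RF H) : Prop :=
  ∃ δ : ℕ → Hˣ,
    z.l.length = w.l.length ∧ δ z.l.length = 1 ∧ w.u = z.u * (δ 0)⁻¹ ∧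
    ∀ (i : ℕ) (hi : i < z.l.length) (hi' : i < w.l.length),
      w.l.get ⟨i, hi'⟩ = ((δ i : H)) * z.l.get ⟨i, hi⟩ * (((δ (i + 1))⁻¹ : Hˣ) : H)

/-- A distance on the rigid factorizations of `H` (axioms (D1)-(D5); (D1) is stated
in the strong form saying the distance vanishes on equivalent rigid factorizations,
which encodes well-definedness on the category of rigid factorizations). -/
structure IsDistance (H : Type*) [Monoid H] (d : RF H → RF H → ℕ) : Prop where
  d_eq : ∀ z w : RF H, z.IsRigid → w.IsRigid → RFEq z w → d z w = 0
  d_symm : ∀ z w : RF H, z.IsRigid → w.IsRigid → z.prod = w.prod → d z w = d w z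
  d_tri : ∀ z w v : RF H, z.IsRigid → w.IsRigid → v.IsRigid →
    z.prod = w.prod → w.prod = v.prod → d z v ≤ d z w + d w v
  d_mul_left : ∀ x z w : RF H, x.IsRigid → z.IsRigid → w.IsRigid → z.prod = w.prod →
    d (x.mul z) (x.mul w) = d z w
  d_mul_right : ∀ y z w : RF H, y.IsRigid → z.IsRigid → w.IsRigid → z.prod = w.prod →
    d (z.mul y) (w.mul y) = d z w
  d_len : ∀ z w : RF H, z.IsRigid → w.IsRigid → z.prod = w.prod →
    (z.len - w.len ≤ d z w ∧ w.len - z.len ≤ d z w) ∧ d z w ≤ max (max z.len w.len) 1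

/-- An `N`-chain of rigid factorizations of `a` between `z` and `w`, in distance `d`. -/
def IsNChain {H : Type*} [Monoid H] (d : RF H → RF H → ℕ) (a : H) (N : ℕ∞)
    (z w : RF H) : Prop :=
  ∃ (n : ℕ) (c : ℕ → RF H), c 0 = z ∧ c n = w ∧
    (∀ i ≤ n, (c i).IsRigid ∧ (c i).prod = a) ∧
    ∀ i < n, (d (c i) (c (i + 1)) : ℕ∞) ≤ N

/-- A monotone `N`-chain: in addition the lengths are non-decreasing or non-increasing. -/
def IsMonNChain {H : Type*} [Monoid H] (d : RF H → RF H → ℕ) (a : H) (N : ℕ∞)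
    (z w : RF H) : Prop :=
  ∃ (n : ℕ) (c : ℕ → RF H), c 0 = z ∧ c n = w ∧
    (∀ i ≤ n, (c i).IsRigid ∧ (c i).prod = a) ∧
    (∀ i < n, (d (c i) (c (i + 1)) : ℕ∞) ≤ N) ∧
    ((∀ i j, i ≤ j → j ≤ n → (c i).len ≤ (c j).len) ∨
      (∀ i j, i ≤ j → j ≤ n → (c j).len ≤ (c i).len))

/-- The catenary degree of `a` in distance `d`. -/
noncomputable def catenaryDeg {H : Type*} [Monoid H] (d : RF H → RF H → ℕ) (a : H) : ℕ∞ :=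
  sInf {N : ℕ∞ | ∀ z w : RF H, z.IsRigid → w.IsRigid → z.prod = a → w.prod = a →
    IsNChain d a N z w}

/-- The monotone catenary degree of `a` in distance `d`. -/
noncomputable def catenaryDegMon {H : Type*} [Monoid H] (d : RF H → RF H → ℕ) (a : H) : ℕ∞ :=
  sInf {N : ℕ∞ | ∀ z w : RF H, z.IsRigid → w.IsRigid → z.prod = a → w.prod = a →
    IsMonNChain d a N z w}

/-- The set of distances of a set of naturals. -/
def DeltaSet (L : Set ℕ) : Set ℕ :=
  {d | 0 < d ∧ ∃ l ∈ L, l + d ∈ L ∧ ∀ m ∈ L, l < m → m < l + d → False}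
/-- Two-sided associativity is an equivalence relation. -/
def assocSetoid (H : Type*) [Monoid H] : Setoid H where
  r := TAssoc
  iseqv := by
    constructor
    · intro a; exact ⟨1, 1, by simp⟩
    · rintro a b ⟨ε, η, rfl⟩
      exact ⟨ε⁻¹, η⁻¹, by simp [mul_assoc]⟩
    · rintro a b c ⟨ε, η, rfl⟩ ⟨ε', η', rfl⟩
      exact ⟨ε' * ε, η * η', by simp [mul_assoc]⟩

/-- Associativity classes of elements of `H`. -/
def AClass (H : Type*) [Monoid H] := Quotient (assocSetoid H)

def mkCls {H : Type*} [Monoid H] (a : H) : AClass H := Quotient.mk (assocSetoid H) a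

/-- The distance between two multisets: `max {card s - card (s ∩ t), card t - card (s ∩ t)}`. -/
noncomputable def mdist {α : Type*} (s t : Multiset α) : ℕ :=
  letI := Classical.decEq α
  max (Multiset.card s - Multiset.card (s ∩ t)) (Multiset.card t - Multiset.card (s ∩ t))

/-- The multiset of associativity classes of the entries of a list. -/
def clsList {H : Type*} [Monoid H] (l : List H) : Multiset (AClass H) :=
  ((l.map mkCls : List (AClass H)) : Multiset (AClass H))

/-- The permutable distance between two rigid factorizations. -/
noncomputable def dpRF {H : Type*} [Monoid H] (z w : RF H) : ℕ :=
  mdist (clsList z.l) (clsList w.l)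

/-- The permutable catenary degree of an element. -/
noncomputable def cpDeg {H : Type*} [Monoid H] (a : H) : ℕ∞ :=
  sInf {N : ℕ∞ | ∀ z w : RF H, z.IsRigid → w.IsRigid → z.prod = a → w.prod = a →
    ∃ (n : ℕ) (c : ℕ → RF H), c 0 = z ∧ c n = w ∧
      (∀ i ≤ n, (c i).IsRigid ∧ (c i).prod = a) ∧
      ∀ i < n, (dpRF (c i) (c (i + 1)) : ℕ∞) ≤ N}

/-- The permutable catenary degree of a monoid. -/
noncomputable def cpMon (H : Type*) [Monoid H] : ℕ∞ := ⨆ a : H, cpDeg a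

/-- The map induced on rigid factorization data by a monoid homomorphism. -/
def mapRF {H T : Type*} [Monoid H] [Monoid T] (φ : H →* T) (z : RF H) : RF T :=
  ⟨Units.map φ z.u, z.l.map φ⟩

section Helpers

variable {H T : Type*}

theorem mkCls_eq_iff [Monoid H] (a b : H) : mkCls a = mkCls b ↔ TAssoc a b :=
  Quotient.eq (r := assocSetoid H)

theorem TAssoc.map' [Monoid H] [Monoid T] (φ : H →* T) {a b : H} (h : TAssoc a b) :
    TAssoc (φ a) (φ b) := by
  obtain ⟨ε, η, rfl⟩ := h
  exact ⟨Units.map φ ε, Units.map φ η, by simp⟩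

theorem TAssoc.symm' [Monoid H] {a b : H} (h : TAssoc a b) : TAssoc b a :=
  (assocSetoid H).iseqv.symm h

def psiCls [Monoid H] [Monoid T] (φ : H →* T) : AClass H → AClass T :=
  Quotient.map (sa := assocSetoid H) (sb := assocSetoid T) φ (fun _ _ h => TAssoc.map' φ h)

theorem psiCls_mk [Monoid H] [Monoid T] (φ : H →* T) (a : H) :
    psiCls φ (mkCls a) = mkCls (φ a) := rfl

theorem clsList_map [Monoid H] [Monoid T] (φ : H →* T) (l : List H) :
    clsList (l.map φ) = (clsList l).map (psiCls φ) := by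
  simp [clsList, Function.comp_def, psiCls_mk]

theorem card_map_inter {α β : Type*} [DecidableEq α] [DecidableEq β] (f : α → β) (S : Set α)
    (hf : Set.InjOn f S) (s : Multiset α) : ∀ (t : Multiset α), (∀ x ∈ s, x ∈ S) →
    (∀ x ∈ t, x ∈ S) → (s.map f ∩ t.map f).card = (s ∩ t).card := by
  induction s using Multiset.induction_on with
  | empty => intro t _ _; simp
  | cons a s ih =>
    intro t hs ht
    have hs' : ∀ x ∈ s, x ∈ S := fun x hx => hs x (Multiset.mem_cons_of_mem hx)
    by_cases h : a ∈ t
    · obtain ⟨t, rfl⟩ := Multiset.exists_cons_of_mem h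
      have ht' : ∀ x ∈ t, x ∈ S := fun x hx => ht x (Multiset.mem_cons_of_mem hx)
      rw [Multiset.map_cons, Multiset.map_cons, Multiset.cons_inter_of_pos _ (by simp),
        Multiset.cons_inter_of_pos _ (by simp)]
      simp [ih t hs' ht']
    · rw [Multiset.map_cons, Multiset.cons_inter_of_neg _ h, Multiset.cons_inter_of_neg]
      · exact ih t hs' ht
      · intro h'
        obtain ⟨b, hb, hab⟩ := Multiset.mem_map.1 h'
        have := hf (ht b hb) (hs a (by simp)) hab
        exact h (this ▸ hb)

theorem mdist_map {α β : Type*} (f : α → β) (S : Set α)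
    (hf : Set.InjOn f S) (s t : Multiset α) (hs : ∀ x ∈ s, x ∈ S)
    (ht : ∀ x ∈ t, x ∈ S) : mdist (s.map f) (t.map f) = mdist s t := by
  classical
  unfold mdist
  simp only [Multiset.card_map]
  rw [card_map_inter f S hf s t hs ht]

theorem dpRF_map [Monoid H] [Monoid T] (φ : H →* T) (hi : IsIsoatomic φ) (z w : RF H)
    (hz : z.IsRigid) (hw : w.IsRigid) : dpRF z w = dpRF (mapRF φ z) (mapRF φ w) := by
  unfold dpRF mapRF
  simp only [clsList_map]
  symm
  apply mdist_map (psiCls φ) {x | ∃ u, MAtom u ∧ mkCls u = x}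
  · rintro _ ⟨u, hu, rfl⟩ _ ⟨v, hv, rfl⟩ h
    rw [psiCls_mk, psiCls_mk, mkCls_eq_iff] at h
    exact (mkCls_eq_iff _ _).2 (hi u v hu hv h)
  · intro x hx
    simp only [clsList, Multiset.mem_coe, List.mem_map] at hx
    obtain ⟨u, hu, rfl⟩ := hx
    exact ⟨u, hz u hu, rfl⟩
  · intro x hx
    simp only [clsList, Multiset.mem_coe, List.mem_map] at hx
    obtain ⟨u, hu, rfl⟩ := hx
    exact ⟨u, hw u hu, rfl⟩

theorem isUnit_of_mul_cancel [CancelMonoid H] {a b : H} (h : IsUnit (a * b)) :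
    IsUnit a ∧ IsUnit b := by
  obtain ⟨e, he⟩ := h
  have h1 : a * (b * ((e⁻¹ : Hˣ) : H)) = 1 := by rw [← mul_assoc, ← he]; simp
  have h2 : (((e⁻¹ : Hˣ) : H) * a) * b = 1 := by rw [mul_assoc, ← he]; simp
  have h3 : (b * ((e⁻¹ : Hˣ) : H)) * a = 1 := by
    apply mul_left_cancel (a := a)
    rw [← mul_assoc, h1]; simp
  have h4 : b * (((e⁻¹ : Hˣ) : H) * a) = 1 := by rw [← mul_assoc, h3]
  exact ⟨⟨⟨a, _, h1, h3⟩, rfl⟩, ⟨⟨b, _, h4, h2⟩, rfl⟩⟩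

theorem MAtom.of_assoc [Monoid H] {a b : H} (ha : MAtom a) (h : TAssoc a b) : MAtom b := by
  obtain ⟨ε, η, rfl⟩ := h
  refine ⟨fun h => ha.1 ?_, fun c d hcd => ?_⟩
  · rwa [Units.isUnit_mul_units, Units.isUnit_units_mul] at h
  · have : a = (((ε⁻¹ : Hˣ) : H) * c) * (d * ((η⁻¹ : Hˣ) : H)) := by
      have : a = ((ε⁻¹ : Hˣ) : H) * (ε * a * η) * ((η⁻¹ : Hˣ) : H) := by simp [mul_assoc]
      rw [this, hcd]; simp [mul_assoc]
    simpa using ha.2 _ _ this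

theorem MAtom.length_one [CancelMonoid H] (l : List H) (hl : ∀ u ∈ l, MAtom u)
    (h : MAtom l.prod) : ∃ u, l = [u] := by
  match l with
  | [] => exact absurd (by simp) h.1
  | [u] => exact ⟨u, rfl⟩
  | u :: v :: l =>
    exfalso
    rcases h.2 u (v :: l).prod (by simp) with h' | h'
    · exact (hl u (by simp)).1 h'
    · rw [List.prod_cons] at h'
      exact (hl v (by simp)).1 (isUnit_of_mul_cancel h').1

theorem WT_list [Monoid H] [Monoid T] (φ : H →* T) (hw : IsWeakTransferHom φ) (a : H)
    (l : List T) (hne : l ≠ []) (hl : ∀ u ∈ l, MAtom u) (h : φ a = l.prod) :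
    ∃ m : List H, (∀ u ∈ m, MAtom u) ∧ a = m.prod ∧ m.length = l.length ∧
      clsList (m.map φ) = clsList l := by
  obtain ⟨u, σ, hu, ha, hs⟩ := hw.2 a l.length (List.length_pos_iff.2 hne) l.get
    (fun i => hl _ (List.get_mem _ _)) (by rw [List.ofFn_get]; exact h)
  refine ⟨List.ofFn u, ?_, ha, by simp, ?_⟩
  · intro x hx
    obtain ⟨i, rfl⟩ := (List.mem_ofFn' _ _).1 hx
    exact hu i
  · have h1 : (List.ofFn (l.get ∘ σ)).Perm (List.ofFn l.get) := Equiv.Perm.ofFn_comp_perm σ _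
    rw [List.ofFn_get] at h1
    have h2 := h1.map mkCls
    unfold clsList
    rw [Multiset.coe_eq_coe]
    refine List.Perm.trans (List.Perm.of_eq ?_) h2
    simp only [List.map_ofFn]
    congr 1
    funext i
    exact (mkCls_eq_iff _ _).2 (hs i)

theorem map_atom [CancelMonoid H] [CancelMonoid T] (hT : Atomic T) (φ : H →* T)
    (hw : IsWeakTransferHom φ) (u : H) (hu : MAtom u) : MAtom (φ u) := by
  obtain ⟨l, hne, hl, hp⟩ := hT (φ u) (fun h => hu.1 ((hw.1.2 u).1 h))
  obtain ⟨m, hm, ha, hlen, -⟩ := WT_list φ hw u l hne hl hp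
  rw [ha] at hu
  obtain ⟨x, rfl⟩ := MAtom.length_one m hm hu
  obtain ⟨y, rfl⟩ := List.length_eq_one_iff.1 hlen.symm
  rw [hp]
  simpa using hl

theorem shift_RF [Monoid H] {t s : H} (h : TAssoc t s) (y : RF H) (hy : y.IsRigid)
    (hp : y.prod = t) : ∃ y' : RF H, y'.IsRigid ∧ y'.prod = s ∧ clsList y'.l = clsList y.l := by
  obtain ⟨ε, η, rfl⟩ := h
  obtain ⟨e, l⟩ := y
  subst hp
  rcases List.eq_nil_or_concat' l with rfl | ⟨l0, x, rfl⟩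
  · exact ⟨⟨ε * e * η, []⟩, by simp [RF.IsRigid], by simp [RF.prod], rfl⟩
  · have hx : TAssoc x (x * (η : H)) := ⟨1, η, by simp⟩
    refine ⟨⟨ε * e, l0 ++ [x * (η : H)]⟩, ?_, by simp [RF.prod, mul_assoc], ?_⟩
    · intro v hv
      rcases List.mem_append.1 hv with hv | hv
      · exact hy v (by simp [hv])
      · rw [List.mem_singleton.1 hv]
        exact (hy x (by simp)).of_assoc hx
    · simp [clsList, (mkCls_eq_iff _ _).2 hx]

theorem lift_RF [Monoid H] [Monoid T] (φ : H →* T) (hw : IsWeakTransferHom φ) (a : H)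
    (y : RF T) (hy : y.IsRigid) (hp : y.prod = φ a) :
    ∃ z : RF H, z.IsRigid ∧ z.prod = a ∧ clsList (z.l.map φ) = clsList y.l := by
  obtain ⟨e, l⟩ := y
  cases l with
  | nil =>
    have : IsUnit a := (hw.1.2 a).1 ⟨e, by simpa [RF.prod] using hp⟩
    obtain ⟨u, rfl⟩ := this
    exact ⟨⟨u, []⟩, by simp [RF.IsRigid], by simp [RF.prod], rfl⟩
  | cons x l =>
    have hx : TAssoc x ((e : T) * x) := ⟨e, 1, by simp⟩
    obtain ⟨m, hm, ha, -, hc⟩ := WT_list φ hw a (((e : T) * x) :: l) (by simp) (by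
      intro v hv
      rcases List.mem_cons.1 hv with rfl | hv
      · exact (hy x (by simp)).of_assoc hx
      · exact hy v (by simp [hv])) (by rw [← hp]; simp [RF.prod, mul_assoc])
    refine ⟨⟨1, m⟩, hm, by simp [RF.prod, ha], ?_⟩
    rw [hc]
    simp [clsList, (mkCls_eq_iff _ _).2 hx]

theorem mdist_self' {α : Type*} (s : Multiset α) : mdist s s = 0 := by
  classical
  unfold mdist
  have h : s ∩ s = s := le_antisymm Multiset.inter_le_left (Multiset.le_inter le_rfl le_rfl)
  have h2 : @Inter.inter _ (@Multiset.instInter α (Classical.decEq α)) s s = s := by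
    convert h
  rw [h2]
  simp

theorem cpDeg_le [Monoid H] [Monoid T] (a : H) (b : T) (R : RF H → RF T → Prop)
    (hR : ∀ z y z' y', R z y → R z' y' → dpRF z z' = dpRF y y')
    (h1 : ∀ z : RF H, z.IsRigid → z.prod = a → ∃ y : RF T, y.IsRigid ∧ y.prod = b ∧ R z y)
    (h2 : ∀ y : RF T, y.IsRigid → y.prod = b → ∃ z : RF H, z.IsRigid ∧ z.prod = a ∧ R z y) :
    cpDeg a ≤ cpDeg b := by
  apply sInf_le_sInf
  intro N hN z w hz hw hza hwa
  obtain ⟨y, hy, hyb, hzy⟩ := h1 z hz hza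
  obtain ⟨x, hx, hxb, hwx⟩ := h1 w hw hwa
  obtain ⟨n, c, rfl, rfl, hc, hd⟩ := hN y x hy hx hyb hxb
  have h3 : ∀ i, ∃ z' : RF H, i ≤ n → z'.IsRigid ∧ z'.prod = a ∧ R z' (c i) := by
    intro i
    by_cases hi : i ≤ n
    · obtain ⟨z', h⟩ := h2 (c i) (hc i hi).1 (hc i hi).2
      exact ⟨z', fun _ => h⟩
    · exact ⟨z, fun h => absurd h hi⟩
  choose L hL using h3
  refine ⟨n + 2, fun i => if i = 0 then z else if i = n + 2 then w else L (i - 1),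
    by simp, by simp, ?_, ?_⟩
  · intro i hi
    dsimp only
    split_ifs with h h'
    · exact ⟨hz, hza⟩
    · exact ⟨hw, hwa⟩
    · have := hL (i - 1) (by omega)
      exact ⟨this.1, this.2.1⟩
  · intro i hi
    rcases Nat.eq_zero_or_pos i with rfl | hpos
    · have e := hR _ _ _ _ hzy (hL 0 (by omega)).2.2
      simp [e.trans (mdist_self' _)]
    · rcases Nat.lt_or_ge i (n + 1) with h | h
      · have e := hR _ _ _ _ (hL (i - 1) (by omega)).2.2 (hL i (by omega)).2.2
        have hd' := hd (i - 1) (by omega)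
        rw [Nat.sub_add_cancel hpos] at hd'
        rw [← e] at hd'
        simpa [show i ≠ 0 by omega, show i ≠ n + 2 by omega, show i ≠ n + 1 by omega] using hd'
      · obtain rfl : i = n + 1 := by omega
        have e := hR _ _ _ _ (hL n (by omega)).2.2 hwx
        simp [e.trans (mdist_self' _)]

theorem cpDeg_eq_of [CancelMonoid H] [CancelMonoid T] (hT : Atomic T) (φ : H →* T)
    (hw : IsWeakTransferHom φ) (hi : IsIsoatomic φ) (a : H) (t : T) (h : TAssoc (φ a) t) :
    cpDeg a = cpDeg t := by
  let R : RF H → RF T → Prop := fun z y => z.IsRigid ∧ clsList (z.l.map φ) = clsList y.l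
  have hR : ∀ z y z' y', R z y → R z' y' → dpRF z z' = dpRF y y' := by
    rintro z y z' y' ⟨hz, h1⟩ ⟨hz', h2⟩
    rw [dpRF_map φ hi z z' hz hz']
    simp only [dpRF, mapRF, h1, h2]
  have h1 : ∀ z : RF H, z.IsRigid → z.prod = a →
      ∃ y : RF T, y.IsRigid ∧ y.prod = t ∧ R z y := by
    intro z hz hza
    obtain ⟨y, hy, hyt, hc⟩ := shift_RF h (mapRF φ z) (by
      intro x hx
      obtain ⟨u, hu, rfl⟩ := List.mem_map.1 hx
      exact map_atom hT φ hw u (hz u hu)) (by simp [RF.prod, mapRF, ← hza, map_list_prod])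
    exact ⟨y, hy, hyt, hz, hc.symm⟩
  have h2 : ∀ y : RF T, y.IsRigid → y.prod = t →
      ∃ z : RF H, z.IsRigid ∧ z.prod = a ∧ R z y := by
    intro y hy hyt
    obtain ⟨y', hy', hp', hc'⟩ := shift_RF h.symm' y hy hyt
    obtain ⟨z, hz, hza, hc⟩ := lift_RF φ hw a y' hy' hp'
    exact ⟨z, hz, hza, hz, hc.trans hc'⟩
  apply le_antisymm
  · exact cpDeg_le a t R hR h1 h2
  · exact cpDeg_le t a (fun y z => R z y)
      (fun y z y' z' h h' => (hR z y z' y' h h').symm) h2 h1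

end Helpers

/-- An isoatomic weak transfer homomorphism preserves the permutable
distance between (permutable) factorizations of an element; in particular the permutable
catenary degrees of `H` and `T` coincide. -/
theorem dp_eq_of_isoatomic_weakTransfer {H T : Type*} [CancelMonoid H] [CancelMonoid T]
    (hH : Atomic H) (hT : Atomic T) (φ : H →* T)
    (hw : IsWeakTransferHom φ) (hi : IsIsoatomic φ) :
    (∀ z w : RF H, z.IsRigid → w.IsRigid → z.prod = w.prod →
      dpRF z w = dpRF (mapRF φ z) (mapRF φ w)) ∧
    cpMon H = cpMon T := by
  refine ⟨fun z w hz hw' _ => dpRF_map φ hi z w hz hw', ?_⟩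
  apply le_antisymm
  · refine iSup_le fun a => ?_
    rw [cpDeg_eq_of hT φ hw hi a (φ a) ⟨1, 1, by simp⟩]
    exact le_iSup (fun t : T => cpDeg t) (φ a)
  · refine iSup_le fun t => ?_
    obtain ⟨ε, η, a, h⟩ := hw.1.1 t
    rw [← cpDeg_eq_of hT φ hw hi a t ⟨ε, η, h⟩]
    exact le_iSup (fun a : H => cpDeg a) a
end

section
/- Let T be a commutative reduced cancellative monoid, H an atomic cancellative monoid, d a distance on H, and φ: H → T a transfer homomorphism; let φ* denote the induced map on rigid factorizations, sending the class of (ε, (u_1, …, u_k)) to the word (φ(u_1), …, φ(u_k)) of atoms of T. Define c_d(a, φ) as the smallest N ∈ ℕ ∪ {∞} such that for any two rigid factorizations z, z' of a with d_p(φ*(z), φ*(z')) = 0 there is a chain z = z_0, z_1, …, z_n = z' in Z*(a) with d(z_{i−1}, z_i) ≤ N and d_p(φ*(z_i), φ*(z)) = 0 for all i, and set c_d(H, φ) = sup{c_d(a, φ) : a ∈ H}. Then for every a ∈ H: c_d(a) ≤ max{c_p(φ(a)), c_d(a, φ)}, and consequently c_d(H) ≤ max{c_p(T), c_d(H, φ)}.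 -/
/-- The multiset of images of the atoms of a rigid factorization under `φ`. -/
def phiS {H T : Type*} [Monoid H] [Monoid T] (φ : H →* T) (z : RF H) : Multiset T :=
  ((z.l.map φ : List T) : Multiset T)

/-- The catenary degree of `a` in the permutable fibers of `φ`, in distance `d`. -/
noncomputable def cdFib {H T : Type*} [Monoid H] [Monoid T]
    (d : RF H → RF H → ℕ) (φ : H →* T) (a : H) : ℕ∞ :=
  sInf {N : ℕ∞ | ∀ z w : RF H, z.IsRigid → w.IsRigid → z.prod = a → w.prod = a →
    mdist (phiS φ z) (phiS φ w) = 0 →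
    ∃ (n : ℕ) (c : ℕ → RF H), c 0 = z ∧ c n = w ∧
      (∀ i ≤ n, (c i).IsRigid ∧ (c i).prod = a ∧ mdist (phiS φ (c i)) (phiS φ z) = 0) ∧
      ∀ i < n, (d (c i) (c (i + 1)) : ℕ∞) ≤ N}

/-- The permutable catenary degree of an element of a commutative reduced monoid,
where factorizations are multisets of atoms. -/
noncomputable def cpTDeg {T : Type*} [CommMonoid T] (b : T) : ℕ∞ :=
  sInf {N : ℕ∞ | ∀ s t : Multiset T, (∀ v ∈ s, MAtom v) → s.prod = b →
    (∀ v ∈ t, MAtom v) → t.prod = b →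
    ∃ (n : ℕ) (c : ℕ → Multiset T), c 0 = s ∧ c n = t ∧
      (∀ i ≤ n, (∀ v ∈ c i, MAtom v) ∧ (c i).prod = b) ∧
      ∀ i < n, (mdist (c i) (c (i + 1)) : ℕ∞) ≤ N}

theorem IsNChain_trans {H : Type*} [Monoid H] {d : RF H → RF H → ℕ} {a : H} {N : ℕ∞}
    {x y z : RF H} (h₁ : IsNChain d a N x y) (h₂ : IsNChain d a N y z) :
    IsNChain d a N x z := by
  obtain ⟨n, c, c0, cn, hc, hd⟩ := h₁
  obtain ⟨m, e, e0, em, he, hde⟩ := h₂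
  refine ⟨n + m, fun i => if i ≤ n then c i else e (i - n), by simp [c0], ?_, ?_, ?_⟩
  · by_cases hm : m = 0
    · subst hm; simp [cn, ← e0, em]
    · have : ¬ (n + m ≤ n) := by omega
      simp [hm, em]
  · intro i hi
    by_cases h : i ≤ n
    · simpa [h] using hc i h
    · simpa [h] using he (i - n) (by omega)
  · intro i hi
    rcases lt_trichotomy i n with h | h | h
    · have h1 : i ≤ n := by omega
      have h2 : i + 1 ≤ n := by omega
      simpa [h1, h2] using hd i h
    · subst h
      have := hde 0 (by omega)
      rw [e0, ← cn] at this
      simpa using this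
    · have h1 : ¬ i ≤ n := by omega
      have h2 : ¬ i + 1 ≤ n := by omega
      have := hde (i - n) (by omega)
      rw [show i - n + 1 = i + 1 - n by omega] at this
      simpa only [h1, h2, if_false] using this

theorem mdist_eq_zero_iff' {α : Type*} (s t : Multiset α) : mdist s t = 0 ↔ s = t := by
  classical
  unfold mdist
  constructor
  · intro h
    simp only [Nat.max_eq_zero_iff] at h
    have h1 := Multiset.eq_of_le_of_card_le
      (@Multiset.inter_le_left _ (Classical.decEq α) s t) (by omega)
    have h2 := Multiset.eq_of_le_of_card_le
      (@Multiset.inter_le_right _ (Classical.decEq α) s t) (by omega)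
    exact h1.symm.trans h2
  · rintro rfl
    have : @Inter.inter _ (@Multiset.instInter _ (Classical.decEq α)) s s = s :=
      le_antisymm (@Multiset.inter_le_left _ (Classical.decEq α) s s)
        (@Multiset.le_inter _ (Classical.decEq α) s s s le_rfl le_rfl)
    simp [this]

theorem mdist_decomp {α : Type*} (s t : Multiset α) :
    ∃ g s' t' : Multiset α, s = g + s' ∧ t = g + t' ∧
      max (Multiset.card s') (Multiset.card t') = mdist s t := by
  letI := Classical.decEq α
  obtain ⟨s', hs⟩ := Multiset.le_iff_exists_add.1 (Multiset.inter_le_left (s := s) (t := t))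
  obtain ⟨t', ht⟩ := Multiset.le_iff_exists_add.1 (Multiset.inter_le_right (s := s) (t := t))
  refine ⟨s ∩ t, s', t', hs, ht, ?_⟩
  have h1 := congrArg Multiset.card hs
  have h2 := congrArg Multiset.card ht
  rw [Multiset.card_add] at h1 h2
  unfold mdist
  congr 1 <;> omega

theorem RF_mul_of_unit {H : Type*} [Monoid H] (x y : RF H) (hy : y.u = 1) :
    x.mul y = ⟨x.u, x.l ++ y.l⟩ := by
  obtain ⟨u, l⟩ := x
  cases l with
  | nil => simp [RF.mul, hy]
  | cons b bs =>
    simp only [RF.mul, hy, Units.val_one, mul_one]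
    rw [List.dropLast_append_getLast]

section Transfer

variable {H T : Type*} [CancelMonoid H] [CancelCommMonoid T]

theorem transfer_split (hTred : ∀ u : Tˣ, u = 1) {φ : H →* T} (hφ : IsTransferHom φ)
    (a : H) (b₁ b₂ : T) (h : φ a = b₁ * b₂) :
    ∃ a₁ a₂ : H, a = a₁ * a₂ ∧ φ a₁ = b₁ ∧ φ a₂ = b₂ := by
  obtain ⟨a₁, a₂, ε, h1, h2, h3⟩ := hφ.2 a b₁ b₂ h
  rw [hTred ε] at h2 h3
  exact ⟨a₁, a₂, h1, by simpa using h2, by simpa using h3⟩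

theorem map_unit_one (hTred : ∀ u : Tˣ, u = 1) (φ : H →* T) (u : Hˣ) : φ (u : H) = 1 := by
  have := hTred (Units.map φ u)
  simpa using congrArg Units.val this

theorem transfer_atom (hTred : ∀ u : Tˣ, u = 1) {φ : H →* T} (hφ : IsTransferHom φ)
    (a : H) : MAtom (φ a) ↔ MAtom a := by
  constructor
  · rintro ⟨h1, h2⟩
    refine ⟨fun h => h1 ((hφ.1.2 a).2 h), fun p q hpq => ?_⟩
    rcases h2 (φ p) (φ q) (by rw [hpq, map_mul]) with h | h
    · exact Or.inl ((hφ.1.2 p).1 h)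
    · exact Or.inr ((hφ.1.2 q).1 h)
  · rintro ⟨h1, h2⟩
    refine ⟨fun h => h1 ((hφ.1.2 a).1 h), fun p q hpq => ?_⟩
    obtain ⟨x, y, hxy, rfl, rfl⟩ := transfer_split hTred hφ a p q hpq
    rcases h2 x y hxy with h | h
    · exact Or.inl ((hφ.1.2 x).2 h)
    · exact Or.inr ((hφ.1.2 y).2 h)

theorem lift_list (hTred : ∀ u : Tˣ, u = 1) {φ : H →* T} (hφ : IsTransferHom φ)
    (m : List T) : ∀ a : H, (∀ v ∈ m, MAtom v) → φ a = m.prod →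
    ∃ z : RF H, z.IsRigid ∧ z.prod = a ∧ z.l.map φ = m ∧ (m ≠ [] → z.u = 1) := by
  induction m with
  | nil =>
    intro a _ h
    have : IsUnit a := (hφ.1.2 a).1 (by rw [h]; simp)
    obtain ⟨u, rfl⟩ := this
    exact ⟨⟨u, []⟩, by simp [RF.IsRigid], by simp [RF.prod], by simp, by simp⟩
  | cons b m ih =>
    intro a hm h
    rw [List.prod_cons] at h
    obtain ⟨a₁, a₂, rfl, h1, h2⟩ := transfer_split hTred hφ a _ _ h
    obtain ⟨z, hz, hzp, hzm, -⟩ := ih a₂ (fun v hv => hm v (by simp [hv])) h2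
    have hb : φ (a₁ * z.u) = b := by rw [map_mul, map_unit_one hTred, mul_one, h1]
    refine ⟨⟨1, (a₁ * z.u) :: z.l⟩, ?_, ?_, ?_, fun _ => rfl⟩
    · intro x hx
      rcases List.mem_cons.1 hx with rfl | hx
      · exact (transfer_atom hTred hφ _).1 (by rw [hb]; exact hm b (by simp))
      · exact hz x hx
    · rw [← hzp]; simp [RF.prod, mul_assoc]
    · simp only [List.map_cons, hb, hzm]

theorem lift_ms (hTred : ∀ u : Tˣ, u = 1) {φ : H →* T} (hφ : IsTransferHom φ)
    (m : Multiset T) (a : H) (hm : ∀ v ∈ m, MAtom v) (h : φ a = m.prod) :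
    ∃ z : RF H, z.IsRigid ∧ z.prod = a ∧ phiS φ z = m ∧ (m ≠ 0 → z.u = 1) := by
  induction m using Quotient.inductionOn with
  | _ l =>
    obtain ⟨z, h1, h2, h3, h4⟩ := lift_list hTred hφ l a (by simpa using hm) (by simpa using h)
    refine ⟨z, h1, h2, by simp [phiS, h3], fun h => h4 (by simpa using h)⟩

theorem phiS_prop (hTred : ∀ u : Tˣ, u = 1) {φ : H →* T} (hφ : IsTransferHom φ)
    (z : RF H) (hz : z.IsRigid) :
    (∀ v ∈ phiS φ z, MAtom v) ∧ (phiS φ z).prod = φ z.prod := by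
  constructor
  · intro v hv
    simp only [phiS, Multiset.mem_coe, List.mem_map] at hv
    obtain ⟨x, hx, rfl⟩ := hv
    exact (transfer_atom hTred hφ x).2 (hz x hx)
  · simp [phiS, RF.prod, map_unit_one hTred, map_list_prod]

/-- Two multiset factorizations of `φ a` lift to factorizations of `a` which are as close
as the multisets. -/
theorem lift_pair (hTred : ∀ u : Tˣ, u = 1) {φ : H →* T} (hφ : IsTransferHom φ)
    {d : RF H → RF H → ℕ} (hd : IsDistance H d) (a : H) (s t : Multiset T)
    (hs : ∀ v ∈ s, MAtom v) (ht : ∀ v ∈ t, MAtom v) (hsp : s.prod = φ a) (htp : t.prod = φ a)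
    (hst : s ≠ t) :
    ∃ z w : RF H, z.IsRigid ∧ w.IsRigid ∧ z.prod = a ∧ w.prod = a ∧ phiS φ z = s ∧
      phiS φ w = t ∧ d z w ≤ mdist s t := by
  obtain ⟨g, s', t', rfl, rfl, hc⟩ := mdist_decomp s t
  rw [Multiset.prod_add] at hsp htp
  have hp : s'.prod = t'.prod := mul_left_cancel (hsp.trans htp.symm)
  have key : ∀ p q : Multiset T, (∀ v ∈ q, MAtom v) → p.prod = q.prod → p = 0 → q = 0 := by
    rintro p q hq hpq rfl
    by_contra h0
    obtain ⟨v, hv⟩ := Multiset.exists_mem_of_ne_zero h0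
    apply (hq v hv).1
    have := Multiset.dvd_prod hv
    rw [← hpq, Multiset.prod_zero] at this
    exact isUnit_of_dvd_one this
  have hs' : ∀ v ∈ s', MAtom v := fun v hv => hs v (by simp [hv])
  have ht' : ∀ v ∈ t', MAtom v := fun v hv => ht v (by simp [hv])
  have hs0 : s' ≠ 0 := fun h => hst (by rw [h, key s' t' ht' hp h])
  have ht0 : t' ≠ 0 := fun h => hst (by rw [h, key t' s' hs' hp.symm h])
  obtain ⟨a₁, a₂, rfl, h1, h2⟩ := transfer_split hTred hφ a _ _ hsp.symm
  obtain ⟨x, hx, hxp, hxm, -⟩ := lift_ms hTred hφ g a₁ (fun v hv => hs v (by simp [hv])) h1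
  obtain ⟨y, hy, hyp, hym, hyu⟩ := lift_ms hTred hφ s' a₂ hs' h2
  obtain ⟨y', hy', hyp', hym', hyu'⟩ := lift_ms hTred hφ t' a₂ ht' (h2.trans hp)
  have hyu := hyu hs0
  have hyu' := hyu' ht0
  have hdd := hd.d_mul_left x y y' hx hy hy' (hyp.trans hyp'.symm)
  have hl := (hd.d_len y y' hy hy' (hyp.trans hyp'.symm)).2
  have c1 : y.len = Multiset.card s' := by rw [← hym]; simp [phiS, RF.len]
  have c2 : y'.len = Multiset.card t' := by rw [← hym']; simp [phiS, RF.len]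
  have c3 := Multiset.card_pos.2 hs0
  rw [RF_mul_of_unit x y hyu, RF_mul_of_unit x y' hyu'] at hdd
  refine ⟨_, _, ?_, ?_, ?_, ?_, ?_, ?_, hdd.le.trans (hl.trans ?_)⟩
  · intro v hv
    rcases List.mem_append.1 hv with h | h
    exacts [hx v h, hy v h]
  · intro v hv
    rcases List.mem_append.1 hv with h | h
    exacts [hx v h, hy' v h]
  · rw [← hxp, ← hyp]; simp [RF.prod, hyu, mul_assoc]
  · rw [← hxp, ← hyp']; simp [RF.prod, hyu', mul_assoc]
  · rw [← hxm, ← hym]; simp [phiS]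
  · rw [← hxm, ← hym']; simp [phiS]
  · rw [← hc, c1, c2]; omega

end Transfer

theorem catenaryDeg_le_aux {H T : Type*} [CancelMonoid H] [CancelCommMonoid T]
    (hTred : ∀ u : Tˣ, u = 1)
    (d : RF H → RF H → ℕ) (hd : IsDistance H d)
    (φ : H →* T) (hφ : IsTransferHom φ) (a : H) :
    catenaryDeg d a ≤ max (cpTDeg (φ a)) (cdFib d φ a) := by
  have hF : cdFib d φ a ∈ {N : ℕ∞ | ∀ z w : RF H, z.IsRigid → w.IsRigid → z.prod = a →
      w.prod = a → mdist (phiS φ z) (phiS φ w) = 0 →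
      ∃ (n : ℕ) (c : ℕ → RF H), c 0 = z ∧ c n = w ∧
      (∀ i ≤ n, (c i).IsRigid ∧ (c i).prod = a ∧ mdist (phiS φ (c i)) (phiS φ z) = 0) ∧
      ∀ i < n, (d (c i) (c (i + 1)) : ℕ∞) ≤ N} := by
    apply csInf_mem
    refine ⟨⊤, fun z w hz hw hza hwa h => ⟨1, fun i => if i = 0 then z else w, by simp,
      by simp, ?_, by simp⟩⟩
    intro i hi
    rw [mdist_eq_zero_iff'] at h
    by_cases h0 : i = 0 <;> simp [h0, mdist_eq_zero_iff', *]
  have hT : cpTDeg (φ a) ∈ {N : ℕ∞ | ∀ s t : Multiset T, (∀ v ∈ s, MAtom v) → s.prod = φ a →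
      (∀ v ∈ t, MAtom v) → t.prod = φ a →
      ∃ (n : ℕ) (c : ℕ → Multiset T), c 0 = s ∧ c n = t ∧
      (∀ i ≤ n, (∀ v ∈ c i, MAtom v) ∧ (c i).prod = φ a) ∧
      ∀ i < n, (mdist (c i) (c (i + 1)) : ℕ∞) ≤ N} := by
    apply csInf_mem
    refine ⟨⊤, fun z w hz hza hw hwa => ⟨1, fun i => if i = 0 then z else w, by simp,
      by simp, ?_, by simp⟩⟩
    intro i hi
    by_cases h0 : i = 0
    · simp only [h0, if_true]; exact ⟨hz, hza⟩
    · simp only [h0, if_false]; exact ⟨hw, hwa⟩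
  set N := max (cpTDeg (φ a)) (cdFib d φ a) with hN
  -- chains inside a fibre
  have fib : ∀ z w : RF H, z.IsRigid → w.IsRigid → z.prod = a → w.prod = a →
      phiS φ z = phiS φ w → IsNChain d a N z w := by
    intro z w hz hw hza hwa h
    obtain ⟨n, c, c0, cn, hc, hcd⟩ := hF z w hz hw hza hwa ((mdist_eq_zero_iff' _ _).2 h)
    exact ⟨n, c, c0, cn, fun i hi => ⟨(hc i hi).1, (hc i hi).2.1⟩,
      fun i hi => (hcd i hi).trans (le_max_right _ _)⟩
  apply csInf_le (OrderBot.bddBelow _)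
  intro z w hz hw hza hwa
  obtain ⟨n, c, c0, cn, hc, hcd⟩ := hT (phiS φ z) (phiS φ w)
    (phiS_prop hTred hφ z hz).1 (by rw [(phiS_prop hTred hφ z hz).2, hza])
    (phiS_prop hTred hφ w hw).1 (by rw [(phiS_prop hTred hφ w hw).2, hwa])
  have step : ∀ i ≤ n, ∃ y : RF H, y.IsRigid ∧ y.prod = a ∧ phiS φ y = c i ∧
      IsNChain d a N z y := by
    intro i
    induction i with
    | zero => exact fun _ => ⟨z, hz, hza, c0.symm, fib z z hz hz hza hza rfl⟩
    | succ i ih =>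
      intro hi
      obtain ⟨y, hy, hya, hyc, hch⟩ := ih (by omega)
      by_cases heq : c i = c (i + 1)
      · exact ⟨y, hy, hya, hyc.trans heq, hch⟩
      · obtain ⟨p, q, hp, hq, hpa, hqa, hpc, hqc, hdd⟩ := lift_pair hTred hφ hd a (c i) (c (i + 1))
          (hc i (by omega)).1 (hc (i + 1) hi).1 (hc i (by omega)).2 (hc (i + 1) hi).2 heq
        refine ⟨q, hq, hqa, hqc, IsNChain_trans hch
          (IsNChain_trans (fib y p hy hp hya hpa (hyc.trans hpc.symm)) ?_)⟩
        refine ⟨1, fun i => if i = 0 then p else q, by simp, by simp, ?_, ?_⟩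
        · intro j hj
          by_cases h0 : j = 0 <;> simp [h0, *]
        · intro j hj
          obtain rfl : j = 0 := by omega
          have h1 : (d p q : ℕ∞) ≤ mdist (c i) (c (i + 1)) := by exact_mod_cast hdd
          have h2 : (d p q : ℕ∞) ≤ N :=
            (h1.trans (hcd i (by omega))).trans (le_max_left _ (cdFib d φ a))
          simpa using h2
  obtain ⟨y, hy, hya, hyc, hch⟩ := step n le_rfl
  exact IsNChain_trans hch (fib y w hy hw hya hwa (hyc.trans cn))

/-- For a transfer homomorphism `φ : H → T` onto a commutative reduced
cancellative monoid and a distance `d` on `H`, the catenary degree of each `a ∈ H` is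
bounded by the max of the permutable catenary degree of `φ(a)` and the catenary degree
in the permutable fibers; consequently `c_d(H) ≤ max {c_p(T), c_d(H, φ)}`. -/
theorem catenaryDeg_le_of_transfer {H T : Type*} [CancelMonoid H] [CancelCommMonoid T]
    (hTred : ∀ u : Tˣ, u = 1) (hH : Atomic H)
    (d : RF H → RF H → ℕ) (hd : IsDistance H d)
    (φ : H →* T) (hφ : IsTransferHom φ) :
    (∀ a : H, catenaryDeg d a ≤ max (cpTDeg (φ a)) (cdFib d φ a)) ∧
    (⨆ a : H, catenaryDeg d a) ≤ max (⨆ b : T, cpTDeg b) (⨆ a : H, cdFib d φ a) := by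
  have h := catenaryDeg_le_aux hTred d hd φ hφ
  refine ⟨h, iSup_le fun a => (h a).trans ?_⟩
  exact max_le_max (le_iSup (fun b : T => cpTDeg b) (φ a))
    (le_iSup (fun a : H => cdFib d φ a) a)
end

section
/- Let H be a cancellative monoid, let ∣' be a divisibility relation on H, and let q be an almost prime-like element of H with respect to ∣'. Then: (1) if q ∣' a_1⋯a_m for some m ≥ 1 and a_1, …, a_m ∈ H, then q ∣' a_i for some i; (2) if q ∣' u_1⋯u_m for some m ≥ 1 and atoms u_1, …, u_m of H, then q ≃ u_i for some i; (3) if H is atomic, then q is an atom of H. -/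
/-- A divisibility relation on a cancellative monoid. -/
structure IsDivRel (H : Type*) [Monoid H] (r : H → H → Prop) : Prop where
  dvd_mul : ∀ a b c : H, r a b ∨ r a c → r a (b * c)
  dvd_unit_mul : ∀ (a : H) (ε η : Hˣ), r a ((ε : H) * a * (η : H))
  assoc_of_dvd_atom : ∀ a u : H, ¬ IsUnit a → MAtom u → r a u → TAssoc a u
  unit_of_dvd_unit : ∀ (a : H) (ε : Hˣ), r a (ε : H) → IsUnit a

/-- An almost prime-like element with respect to a divisibility relation `r`. -/
def AlmostPrimeLikeRel {H : Type*} [Monoid H] (r : H → H → Prop) (q : H) : Prop :=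
  ¬ IsUnit q ∧ ∀ a b : H, r q (a * b) → r q a ∨ r q b

/-- Consequences of being almost prime-like with respect to a
divisibility relation: dividing a product means dividing a factor; dividing a product of
atoms means being associated to one of them; and in an atomic monoid, almost prime-like
elements are atoms. -/
theorem almostPrimeLike_consequences {H : Type*} [CancelMonoid H]
    (r : H → H → Prop) (hr : IsDivRel H r) (q : H) (hq : AlmostPrimeLikeRel r q) :
    (∀ l : List H, l ≠ [] → r q l.prod → ∃ a ∈ l, r q a) ∧
    (∀ l : List H, l ≠ [] → (∀ u ∈ l, MAtom u) → r q l.prod → ∃ u ∈ l, TAssoc q u) ∧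
    (Atomic H → MAtom q) := by
  have h1 : ∀ l : List H, r q l.prod → ∃ a ∈ l, r q a := by
    intro l
    induction l with
    | nil =>
      intro h
      exact absurd (hr.unit_of_dvd_unit q 1 (by simpa using h)) hq.1
    | cons x t ih =>
      intro h
      rw [List.prod_cons] at h
      rcases hq.2 _ _ h with h | h
      · exact ⟨x, by simp, h⟩
      · obtain ⟨a, ha, h⟩ := ih h
        exact ⟨a, by simp [ha], h⟩
  have h2 : ∀ l : List H, (∀ u ∈ l, MAtom u) → r q l.prod → ∃ u ∈ l, TAssoc q u := by
    intro l hl h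
    obtain ⟨a, ha, h⟩ := h1 l h
    exact ⟨a, ha, hr.assoc_of_dvd_atom q a hq.1 (hl a ha) h⟩
  refine ⟨fun l _ => h1 l, fun l _ => h2 l, fun hA => ⟨hq.1, ?_⟩⟩
  intro a b hab
  obtain ⟨l, -, hl, hql⟩ := hA q hq.1
  have hqq : r q q := by simpa using hr.dvd_unit_mul q 1 1
  obtain ⟨u, hu, ε, η, hue⟩ := h2 l hl (hql ▸ hqq)
  have := (hl u hu).2 (ε * a) (b * η) (by rw [hue, hab]; simp only [mul_assoc])
  simpa using this
end

section
/- Let H be an atomic cancellative monoid and let q be an almost prime-like element of H with respect to ∣_p. Then q is prime-like if and only if V_q(ab) = V_q(a) + V_q(b) (the elementwise sum of sets of nonnegative integers) for all a, b ∈ H. -/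
/-- Divisibility up to permutation: `a ∣_p b`. -/
def dvdP {H : Type*} [Monoid H] (a b : H) : Prop :=
  ∃ (k l : ℕ) (u : Fin k → H) (v : Fin l → H),
    (∀ i, MAtom (u i)) ∧ (∀ j, MAtom (v j)) ∧
    TAssoc a (List.ofFn u).prod ∧ TAssoc b (List.ofFn v).prod ∧
    ∃ σ : Fin k ↪ Fin l, ∀ i, TAssoc (u i) (v (σ i))

/-- An almost prime-like element (with respect to `∣_p`). -/
def APLike {H : Type*} [Monoid H] (q : H) : Prop :=
  ¬ IsUnit q ∧ ∀ a b : H, dvdP q (a * b) → dvdP q a ∨ dvdP q b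

/-- The number of entries of `l` associated to `q`. -/
noncomputable def countAssoc {H : Type*} [Monoid H] (l : List H) (q : H) : ℕ :=
  Nat.card {i : Fin l.length // TAssoc (l.get i) q}

/-- The `q`-adic valuation of `a`: the set of numbers of occurrences (up to associativity)
of `q` in factorizations of `a` into atoms. -/
def Vq {H : Type*} [Monoid H] (q a : H) : Set ℕ :=
  {n | ∃ l : List H, (∀ u ∈ l, MAtom u) ∧ TAssoc a l.prod ∧ countAssoc l q = n}

/-- A prime-like element: almost prime-like, with singleton `q`-adic valuations. -/
def PrimeLike {H : Type*} [Monoid H] (q : H) : Prop :=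
  APLike q ∧ ∀ a : H, ∃ n : ℕ, Vq q a = {n}

/-- `H` is permutably factorial. -/
def PermutablyFactorial (H : Type*) [Monoid H] : Prop :=
  Atomic H ∧
    ∀ (k l : ℕ) (u : Fin k → H) (v : Fin l → H),
      (∀ i, MAtom (u i)) → (∀ j, MAtom (v j)) →
      (List.ofFn u).prod = (List.ofFn v).prod →
      ∃ σ : Fin k ≃ Fin l, ∀ i, TAssoc (u i) (v (σ i))

theorem ca_nil {H : Type*} [Monoid H] (q : H) : countAssoc [] q = 0 := by
  unfold countAssoc
  have : IsEmpty {i : Fin ([] : List H).length // TAssoc (([] : List H).get i) q} :=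
    ⟨fun i => Fin.elim0 i.1⟩
  exact Nat.card_of_isEmpty

open Classical in
theorem ca_cons {H : Type*} [Monoid H] (x : H) (l : List H) (q : H) :
    countAssoc (x :: l) q = (if TAssoc x q then 1 else 0) + countAssoc l q := by
  unfold countAssoc
  rw [Nat.card_eq_fintype_card, Nat.card_eq_fintype_card, Fintype.card_subtype,
    Fintype.card_subtype]
  have h := Fin.card_filter_univ_succ (n := l.length)
    (fun i => TAssoc ((x :: l).get i) q)
  refine h.trans ?_
  by_cases hx : TAssoc x q
  · rw [if_pos hx, if_pos (show TAssoc ((x :: l).get 0) q from hx), add_comm]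
    rfl
  · rw [if_neg hx, if_neg (show ¬ TAssoc ((x :: l).get 0) q from hx), zero_add]
    rfl

theorem ca_append {H : Type*} [Monoid H] (l m : List H) (q : H) :
    countAssoc (l ++ m) q = countAssoc l q + countAssoc m q := by
  induction l with
  | nil => simp [ca_nil]
  | cons x l ih => rw [List.cons_append, ca_cons, ca_cons, ih, add_assoc]

theorem ta_symm {H : Type*} [Monoid H] {a b : H} (h : TAssoc a b) : TAssoc b a := by
  obtain ⟨e, f, rfl⟩ := h
  exact ⟨e⁻¹, f⁻¹, by simp [mul_assoc]⟩

theorem ta_trans {H : Type*} [Monoid H] {a b c : H} (h : TAssoc a b) (h' : TAssoc b c) :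
    TAssoc a c := by
  obtain ⟨e, f, rfl⟩ := h
  obtain ⟨e', f', rfl⟩ := h'
  exact ⟨e' * e, f * f', by simp [mul_assoc]⟩

theorem ta_refl {H : Type*} [Monoid H] (a : H) : TAssoc a a := ⟨1, 1, by simp⟩

theorem unit_of_ta {H : Type*} [Monoid H] {a b : H} (h : TAssoc a b) (ha : IsUnit a) :
    IsUnit b := by
  obtain ⟨e, f, rfl⟩ := h
  exact (e.isUnit.mul ha).mul f.isUnit

theorem unit_left {H : Type*} [CancelMonoid H] {a b : H} (h : IsUnit (a * b)) : IsUnit a := by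
  obtain ⟨c, hc⟩ := h.exists_right_inv
  have h1 : a * (b * c) = 1 := by rw [← mul_assoc, hc]
  have h2 : (b * c) * a = 1 := by
    apply mul_left_cancel (a := a)
    rw [← mul_assoc, h1, one_mul, mul_one]
  exact ⟨⟨a, b * c, h1, h2⟩, rfl⟩

theorem atom_ta {H : Type*} [Monoid H] {a b : H} (h : TAssoc a b) (ha : MAtom a) :
    MAtom b := by
  refine ⟨fun hb => ha.1 (unit_of_ta (ta_symm h) hb), fun x y hxy => ?_⟩
  obtain ⟨e, f, he⟩ := ta_symm h
  rcases ha.2 (e * x) (y * f) (by rw [he, hxy]; simp [mul_assoc]) with h1 | h1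
  · left; simpa using h1
  · right; simpa using h1

theorem list_unit {H : Type*} [CancelMonoid H] {l : List H} (hl : ∀ u ∈ l, MAtom u)
    (h : IsUnit l.prod) : l = [] := by
  cases l with
  | nil => rfl
  | cons x t =>
    rw [List.prod_cons] at h
    exact absurd (unit_left h) (hl x (by simp)).1

theorem list_atom {H : Type*} [CancelMonoid H] {l : List H} (hl : ∀ u ∈ l, MAtom u)
    (h : MAtom l.prod) : ∃ x, l = [x] := by
  rcases l with _ | ⟨x, t⟩
  · exact absurd isUnit_one h.1
  · refine ⟨x, ?_⟩
    rcases h.2 x t.prod (by simp) with h1 | h1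
    · exact absurd h1 (hl x (by simp)).1
    · rw [list_unit (fun u hu => hl u (by simp [hu])) h1]

theorem vq_unit {H : Type*} [CancelMonoid H] (q a : H) (ha : IsUnit a) : Vq q a = {0} := by
  ext n
  simp only [Set.mem_singleton_iff]
  constructor
  · rintro ⟨l, hl, ht, rfl⟩
    rw [list_unit hl (unit_of_ta ht ha), ca_nil]
  · rintro rfl
    obtain ⟨u, rfl⟩ := ha
    exact ⟨[], by simp, ⟨u⁻¹, 1, by simp⟩, ca_nil q⟩

open Classical in
theorem vq_atom {H : Type*} [CancelMonoid H] (q a : H) (ha : MAtom a) :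
    Vq q a = {if TAssoc a q then 1 else 0} := by
  ext n
  simp only [Set.mem_singleton_iff]
  constructor
  · rintro ⟨l, hl, ht, rfl⟩
    obtain ⟨x, rfl⟩ := list_atom hl (atom_ta ht ha)
    rw [List.prod_singleton] at ht
    have : TAssoc x q ↔ TAssoc a q := ⟨ta_trans ht, ta_trans (ta_symm ht)⟩
    rw [ca_cons, ca_nil]
    simp [this]
  · rintro rfl
    exact ⟨[a], by simpa using ha, by simpa using ta_refl a, by rw [ca_cons, ca_nil, add_zero]⟩

theorem vq_add {H : Type*} [CancelMonoid H] {q a b : H} {m n : ℕ} (hm : m ∈ Vq q a)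
    (hn : n ∈ Vq q b) : m + n ∈ Vq q (a * b) := by
  obtain ⟨l, hl, ht, rfl⟩ := hm
  obtain ⟨l', hl', ht', rfl⟩ := hn
  obtain ⟨e, f, h1⟩ := ta_symm ht
  obtain ⟨e', f', h2⟩ := ta_symm ht'
  subst h1 h2
  cases l' with
  | nil =>
    refine ⟨l, hl, ta_symm ⟨e, f * e' * f', by simp [mul_assoc]⟩, by simp [ca_nil]⟩
  | cons x t =>
    have hx : TAssoc x ((f * e' : Hˣ) * x) := ⟨f * e', 1, by simp⟩
    refine ⟨l ++ ((f * e' : Hˣ) * x) :: t, ?_, ta_symm ⟨e, f', by simp [mul_assoc]⟩, ?_⟩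
    · intro u hu
      rcases List.mem_append.1 hu with hu | hu
      · exact hl u hu
      · rcases List.mem_cons.1 hu with rfl | hu
        · exact atom_ta hx (hl' x (by simp))
        · exact hl' u (by simp [hu])
    · have : TAssoc ((f * e' : Hˣ) * x) q ↔ TAssoc x q :=
        ⟨ta_trans hx, ta_trans (ta_symm hx)⟩
      rw [ca_append, ca_cons, ca_cons]
      congr 2
      classical exact if_congr this rfl rfl

open Pointwise in
/-- An almost prime-like element `q` is prime-like iff the `q`-adic
valuation is additive: `V_q(ab) = V_q(a) + V_q(b)` for all `a, b`. -/
theorem primeLike_iff_valuation_additive {H : Type*} [CancelMonoid H]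
    (hH : Atomic H) (q : H) (hq : APLike q) :
    (∀ a : H, ∃ n : ℕ, Vq q a = {n}) ↔ ∀ a b : H, Vq q (a * b) = Vq q a + Vq q b := by
  constructor
  · intro h a b
    obtain ⟨m, hm⟩ := h a
    obtain ⟨n, hn⟩ := h b
    obtain ⟨k, hk⟩ := h (a * b)
    have := vq_add (q := q) (a := a) (b := b) (m := m) (n := n) (by simp [hm]) (by simp [hn])
    rw [hk, Set.mem_singleton_iff] at this
    rw [hk, hm, hn, Set.singleton_add_singleton, this]
  · intro h a
    by_cases ha : IsUnit a
    · exact ⟨0, vq_unit q a ha⟩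
    · obtain ⟨l, -, hl, rfl⟩ := hH a ha
      clear ha
      induction l with
      | nil => exact ⟨0, vq_unit q _ (by simp)⟩
      | cons x t ih =>
        obtain ⟨n, hn⟩ := ih (fun u hu => hl u (by simp [hu]))
        rw [List.prod_cons, h, hn, vq_atom q x (hl x (by simp)), Set.singleton_add_singleton]
        exact ⟨_, rfl⟩
end
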